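/- Let α be a type, A₁, A₂ : Set α two sub-alphabets, and p₁, p₂ the corresponding natural projections (List.filter (· ∈ A₁) and List.filter (· ∈ A₂)). Let L₁, I₁, L₂, I₂ be languages over α with L₁ · I₁ · L₁ ⊆ L₁ and L₂ · I₂ · L₂ ⊆ L₂, and suppose p₁⁻¹(I₁) ∩ p₂⁻¹(I₂) ≠ ∅. Then the language K = p₁⁻¹(L₁) ∩ p₂⁻¹(L₂) satisfies K · (p₁⁻¹(I₁) ∩ p₂⁻¹(I₂)) · K ⊆ K; i.e., the language of the parallel composition is a synchronizing language with nonempty synchronizing-word set p₁⁻¹(I₁) ∩ p₂⁻¹(I₂). (Language form of Proposition 2.) -/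

import Mathlib

/-- The inverse natural projection of a language: all words over `α` whose projection
(the subword of letters in `A`) lies in `L`. -/
def invProj {α : Type*} (A : Set α) [DecidablePred (· ∈ A)] (L : Language α) : Language α :=
  {s : List α | s.filter (fun a => decide (a ∈ A)) ∈ L}

/-- Intersection of two languages. -/
def langInter {α : Type*} (L₁ L₂ : Language α) : Language α := {s | s ∈ L₁ ∧ s ∈ L₂}

/-- `L` is a synchronizing language with synchronizing-word set `I`: two words of `L` joined by a
word of `I` again form a word of `L`. The set `I` is allowed to be empty. -/
def IsSynchronizing {α : Type*} (L I : Language α) : Prop :=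
  L * I * L ≤ L

section InvProj

variable {α : Type*} (A : Set α) [DecidablePred (· ∈ A)] {L M I : Language α}

theorem invProj_mono (h : L ≤ M) : invProj A L ≤ invProj A M :=
  fun _ hs => h hs

variable (L M) in
theorem invProj_mul_invProj_le : invProj A L * invProj A M ≤ invProj A (L * M) := by
  rintro _ ⟨s, hs, t, ht, rfl⟩
  change (s ++ t).filter _ ∈ L * M
  rw [List.filter_append]
  exact Language.append_mem_mul hs ht

theorem isSynchronizing_invProj (h : IsSynchronizing L I) :
    IsSynchronizing (invProj A L) (invProj A I) :=
  calc
    invProj A L * invProj A I * invProj A L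
    _ ≤ invProj A (L * I) * invProj A L :=
      mul_le_mul_left (invProj_mul_invProj_le A L I) _
    _ ≤ invProj A (L * I * L) := invProj_mul_invProj_le A (L * I) L
    _ ≤ invProj A L := invProj_mono A h

end InvProj

section LangInter

variable {α : Type*} {L₁ L₂ M₁ M₂ I₁ I₂ : Language α}

theorem langInter_mono (h₁ : L₁ ≤ M₁) (h₂ : L₂ ≤ M₂) : langInter L₁ L₂ ≤ langInter M₁ M₂ :=
  fun _ hs => ⟨h₁ hs.1, h₂ hs.2⟩

variable (L₁ L₂ M₁ M₂) in
theorem langInter_mul_langInter_le :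
    langInter L₁ L₂ * langInter M₁ M₂ ≤ langInter (L₁ * M₁) (L₂ * M₂) := by
  rintro _ ⟨s, hs, t, ht, rfl⟩
  exact ⟨Language.append_mem_mul hs.1 ht.1, Language.append_mem_mul hs.2 ht.2⟩

theorem isSynchronizing_langInter (h₁ : IsSynchronizing L₁ I₁) (h₂ : IsSynchronizing L₂ I₂) :
    IsSynchronizing (langInter L₁ L₂) (langInter I₁ I₂) :=
  calc
    langInter L₁ L₂ * langInter I₁ I₂ * langInter L₁ L₂
    _ ≤ langInter (L₁ * I₁) (L₂ * I₂) * langInter L₁ L₂ :=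
      mul_le_mul_left (langInter_mul_langInter_le L₁ L₂ I₁ I₂) _
    _ ≤ langInter (L₁ * I₁ * L₁) (L₂ * I₂ * L₂) :=
      langInter_mul_langInter_le (L₁ * I₁) (L₂ * I₂) L₁ L₂
    _ ≤ langInter L₁ L₂ := langInter_mono h₁ h₂

end LangInter

/-- Language form of Proposition 2: the language of the parallel composition
`p₁⁻¹(L₁) ∩ p₂⁻¹(L₂)` of two synchronizing components is synchronizing, provided the
inverse projections of the synchronizing-word sets intersect. -/
theorem parallel_comp_sync {α : Type*} (A₁ A₂ : Set α)
    [DecidablePred (· ∈ A₁)] [DecidablePred (· ∈ A₂)]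
    (L₁ I₁ L₂ I₂ : Language α)
    (h₁ : L₁ * I₁ * L₁ ≤ L₁) (h₂ : L₂ * I₂ * L₂ ≤ L₂)
    (hne : langInter (invProj A₁ I₁) (invProj A₂ I₂) ≠ (∅ : Set (List α))) :
    langInter (invProj A₁ L₁) (invProj A₂ L₂) *
        langInter (invProj A₁ I₁) (invProj A₂ I₂) *
        langInter (invProj A₁ L₁) (invProj A₂ L₂) ≤
      langInter (invProj A₁ L₁) (invProj A₂ L₂) :=
  isSynchronizing_langInter (isSynchronizing_invProj A₁ h₁) (isSynchronizing_invProj A₂ h₂)
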